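/- For every real R > 9, the integral I_ct^2 := ∫_{−R−2}^{−R+2} ((z^t_1(β+R) − R) − R) (z^t_1)'(β+R) z^t_2(β+R) / [(R − (z^t_1(β+R) − R))² + (z^t_2(β+R))²]² dβ satisfies |I_ct^2| ≤ 12(2R+2)/(2R−2)⁴, where (z^t_1)' denotes the derivative of z^t_1 (which exists except at finitely many points, so the integrand is defined almost everywhere). -/

import Mathlib

/-- First component of the tail curve `z^t` (its values outside `[-2,2]` are irrelevant). -/
noncomputable def zt1 (a : ℝ) : ℝ :=
  if a ≤ -1 then a else if a ≤ 1 then a^3 else a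

/-- Second component of the tail curve `z^t` (its values outside `[-2,2]` are irrelevant). -/
noncomputable def zt2 (a : ℝ) : ℝ :=
  if a ≤ -1 then -a - 2 else if a ≤ 1 then a else -a + 2

/-!
Seen from the right vertical tangent, every point of the left tail has horizontal displacement `u`
with `2|R| - 2 ≤ |u|`, so the kernel `u / (u² + v²)²` is at most `1 / (2|R| - 2)³` in absolute value
there. The tail itself contributes `|(z^t_1)'| ≤ 3`, `|z^t_2| ≤ 1` and a parameter interval of
length `4`.
-/

open Set

theorem abs_div_sq_add_sq_sq_le {m u : ℝ} (v : ℝ) (hm : 0 < m) (hu : m ≤ |u|) :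
    |u / (u ^ 2 + v ^ 2) ^ 2| ≤ 1 / m ^ 3 := by
  have hu_pos : 0 < |u| := hm.trans_le hu
  have hden : |u| ^ 4 ≤ (u ^ 2 + v ^ 2) ^ 2 :=
    calc |u| ^ 4 = (u ^ 2) ^ 2 := by rw [← sq_abs u]; ring
      _ ≤ (u ^ 2 + v ^ 2) ^ 2 := by gcongr; exact le_add_of_nonneg_right (sq_nonneg v)
  calc |u / (u ^ 2 + v ^ 2) ^ 2| = |u| / (u ^ 2 + v ^ 2) ^ 2 := by
        rw [abs_div, abs_of_nonneg (sq_nonneg (u ^ 2 + v ^ 2))]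
    _ ≤ |u| / |u| ^ 4 := by gcongr
    _ = 1 / |u| ^ 3 := by field_simp
    _ ≤ 1 / m ^ 3 := by gcongr

theorem abs_integral_mul_mul_div_sq_add_sq_sq_le {a b m D H : ℝ} {u d v : ℝ → ℝ} (hm : 0 < m)
    (hu : ∀ t ∈ uIoc a b, m ≤ |u t|) (hd : ∀ t ∈ uIoc a b, |d t| ≤ D)
    (hv : ∀ t ∈ uIoc a b, |v t| ≤ H) :
    |∫ t in a..b, u t * d t * v t / (u t ^ 2 + v t ^ 2) ^ 2| ≤ 1 / m ^ 3 * D * H * |b - a| := by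
  rw [← Real.norm_eq_abs]
  refine intervalIntegral.norm_integral_le_of_norm_le_const fun t ht ↦ ?_
  rw [Real.norm_eq_abs]
  have hD : 0 ≤ D := (abs_nonneg _).trans (hd t ht)
  calc |u t * d t * v t / (u t ^ 2 + v t ^ 2) ^ 2|
      = |u t / (u t ^ 2 + v t ^ 2) ^ 2| * |d t| * |v t| := by
        rw [← abs_mul, ← abs_mul]; ring_nf
    _ ≤ 1 / m ^ 3 * D * H := by
        gcongr
        exacts [abs_div_sq_add_sq_sq_le (v t) hm (hu t ht), hd t ht, hv t ht]

theorem lipschitzOnWith_cube_sub_self : LipschitzOnWith 2 (fun c : ℝ ↦ c ^ 3 - c) (Icc (-1) 1) := by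
  refine LipschitzOnWith.of_dist_le_mul fun x ⟨hx₁, hx₂⟩ y ⟨hy₁, hy₂⟩ ↦ ?_
  have hfactor : |x ^ 2 + x * y + y ^ 2 - 1| ≤ 2 :=
    abs_le.2 ⟨by nlinarith [sq_nonneg (x + y), sq_nonneg x, sq_nonneg y],
      by nlinarith [sq_nonneg (x - y)]⟩
  calc |x ^ 3 - x - (y ^ 3 - y)| = |x ^ 2 + x * y + y ^ 2 - 1| * |x - y| := by
        rw [← abs_mul]; ring_nf
    _ ≤ 2 * |x - y| := by gcongr

-- Splitting off `c ^ 3` and `c` separately would only give the Lipschitz constant `1 + 3 + 1`.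
theorem zt1_eq_add_projIcc (a : ℝ) :
    zt1 a = a + ((projIcc (-1) 1 (by norm_num) a : ℝ) ^ 3 - projIcc (-1) 1 (by norm_num) a) := by
  rw [coe_projIcc, zt1]
  split_ifs with h₁ h₂
  · rw [min_eq_right (by linarith), max_eq_left h₁]
    norm_num
  · rw [min_eq_right h₂, max_eq_right (not_le.1 h₁).le]
    ring
  · rw [min_eq_left (by linarith)]
    norm_num

theorem lipschitzWith_zt1 : LipschitzWith 3 zt1 := by
  have hcorrection : LipschitzWith (2 * 1) fun a : ℝ ↦
      (projIcc (-1) 1 (by norm_num) a : ℝ) ^ 3 - projIcc (-1) 1 (by norm_num) a :=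
    lipschitzOnWith_cube_sub_self.to_restrict.comp (LipschitzWith.projIcc _)
  rw [funext zt1_eq_add_projIcc, show (3 : NNReal) = 1 + 2 * 1 by norm_num]
  exact LipschitzWith.id.add hcorrection

theorem abs_deriv_zt1_le (a : ℝ) : |deriv zt1 a| ≤ 3 :=
  norm_deriv_le_of_lipschitz lipschitzWith_zt1

theorem abs_zt1_le_abs (a : ℝ) : |zt1 a| ≤ |a| := by
  unfold zt1
  split_ifs with h₁ h₂
  · rfl
  · rw [abs_pow]
    exact pow_le_of_le_one (abs_nonneg a) (abs_le.2 ⟨(not_le.1 h₁).le, h₂⟩) (by norm_num)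
  · rfl

theorem abs_zt2_le_one {a : ℝ} (ha : |a| ≤ 2) : |zt2 a| ≤ 1 := by
  obtain ⟨h₁, h₂⟩ := abs_le.1 ha
  unfold zt2
  split_ifs <;> exact abs_le.2 ⟨by linarith, by linarith⟩

theorem le_abs_zt1_sub_sub {a : ℝ} (R : ℝ) (ha : |a| ≤ 2) : 2 * |R| - 2 ≤ |zt1 a - R - R| :=
  calc 2 * |R| - 2 ≤ |2 * R| - |zt1 a| := by
        rw [abs_mul, abs_two]
        gcongr
        exact (abs_zt1_le_abs a).trans ha
    _ ≤ |2 * R - zt1 a| := abs_sub_abs_le_abs_sub _ _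
    _ = |zt1 a - R - R| := by rw [abs_sub_comm]; ring_nf

theorem Ict2_bound_general (R : ℝ) (hR : 1 < |R|) :
    |∫ b in (-R - 2)..(-R + 2),
        ((zt1 (b + R) - R) - R) * deriv zt1 (b + R) * zt2 (b + R) /
          ((R - (zt1 (b + R) - R)) ^ 2 + (zt2 (b + R)) ^ 2) ^ 2|
      ≤ 12 / (2 * |R| - 2) ^ 3 := by
  have htail : ∀ b ∈ uIoc (-R - 2) (-R + 2), |b + R| ≤ 2 := fun b hb ↦ by
    obtain ⟨hb₁, hb₂⟩ := uIoc_of_le (show -R - 2 ≤ -R + 2 by linarith) ▸ hb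
    exact abs_le.2 ⟨by linarith, by linarith⟩
  have hlength : |-R + 2 - (-R - 2)| = 4 := by ring_nf; norm_num
  simp_rw [sub_sq_comm R]
  calc _ ≤ 1 / (2 * |R| - 2) ^ 3 * 3 * 1 * |-R + 2 - (-R - 2)| :=
        abs_integral_mul_mul_div_sq_add_sq_sq_le (by linarith)
          (fun b hb ↦ le_abs_zt1_sub_sub R (htail b hb)) (fun b _ ↦ abs_deriv_zt1_le (b + R))
          (fun b hb ↦ abs_zt2_le_one (htail b hb))
    _ = 12 / (2 * |R| - 2) ^ 3 := by rw [hlength]; ring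

/-- For every `R > 9`, the contribution `I_ct^2` of the left tail to the velocity derivative
at the right vertical tangent satisfies `|I_ct^2| ≤ 12(2R+2)/(2R-2)⁴`. -/
theorem Ict2_bound (R : ℝ) (hR : 9 < R) :
    |∫ b in (-R-2)..(-R+2),
        ((zt1 (b + R) - R) - R) * deriv zt1 (b + R) * zt2 (b + R) /
          ((R - (zt1 (b + R) - R))^2 + (zt2 (b + R))^2)^2|
      ≤ 12 * (2*R + 2) / (2*R - 2)^4 := by
  have hm : 0 < 2 * R - 2 := by linarith
  calc _ ≤ 12 / (2 * |R| - 2) ^ 3 := Ict2_bound_general R (lt_abs.2 (.inl (by linarith)))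
    _ = 12 * (2 * R - 2) / (2 * R - 2) ^ 4 := by rw [abs_of_pos (by linarith)]; field_simp
    _ ≤ 12 * (2 * R + 2) / (2 * R - 2) ^ 4 := by gcongr; linarith
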